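/- The function f(z) = Σ_{k=1}^{∞} 2^{−(k−1)!} · z^{k!}, which is holomorphic in the open unit disk and continuous on the closed unit disk \overline{U}, is quasianalytic in the sense of Gonchar on \overline{U}, i.e. liminf_{k→∞} ρ_k(f, \overline{U})^{1/k} < 1, and consequently its graph Γ_f = {(z, f(z)) ∈ ℂ² : z ∈ \overline{U}} is pluripolar in ℂ². -/

import Mathlib

open Filter Metric

noncomputable section

/-- A subharmonic function on `ℂ` with values in `[-∞, ∞)`: upper semicontinuous,
never `+∞`, and dominated on every closed disk by every continuous function which is
harmonic inside the disk and dominates it on the boundary circle. -/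
def SubharmonicFn (u : ℂ → EReal) : Prop :=
  UpperSemicontinuous u ∧ (∀ z, u z ≠ ⊤) ∧
  ∀ (c : ℂ) (r : ℝ), 0 < r →
    ∀ h : ℂ → ℝ, ContinuousOn h (closedBall c r) →
      (∃ F : ℂ → ℂ, DifferentiableOn ℂ F (ball c r) ∧ ∀ z ∈ ball c r, h z = (F z).re) →
      (∀ z ∈ sphere c r, u z ≤ ((h z : ℝ) : EReal)) →
      ∀ z ∈ closedBall c r, u z ≤ ((h z : ℝ) : EReal)

/-- A plurisubharmonic function on a complex normed space: upper semicontinuous,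
never `+∞`, and subharmonic along every complex line. -/
def PshFn {E : Type*} [NormedAddCommGroup E] [NormedSpace ℂ E] (u : E → EReal) : Prop :=
  UpperSemicontinuous u ∧ (∀ z, u z ≠ ⊤) ∧
  ∀ a v : E, SubharmonicFn (fun w : ℂ => u (a + w • v))

/-- A set is pluripolar if it is contained in the `-∞` set of a plurisubharmonic
function which is not identically `-∞`. -/
def Pluripolar {E : Type*} [NormedAddCommGroup E] [NormedSpace ℂ E] (S : Set E) : Prop :=
  ∃ u : E → EReal, PshFn u ∧ (∃ z, u z ≠ ⊥) ∧ ∀ p ∈ S, u p = ⊥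

/-- The lacunary series `f(z) = Σ_{k≥1} 2^{−(k−1)!} z^{k!}`
(reindexed as `Σ_{j≥0} 2^{−j!} z^{(j+1)!}`). -/
def lacunaryF (z : ℂ) : ℂ :=
  ∑' j : ℕ, ((2 : ℂ) ^ (Nat.factorial j))⁻¹ * z ^ (Nat.factorial (j + 1))

/-- `rhoDisk f k` : the deviation of the best uniform approximation of `f` on the
closed unit disk by rational functions of degree at most `k`. -/
def rhoDisk (f : ℂ → ℂ) (k : ℕ) : ℝ :=
  sInf {t : ℝ | ∃ p q : Polynomial ℂ, p.natDegree ≤ k ∧ q.natDegree ≤ k ∧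
    (∀ z ∈ closedBall (0 : ℂ) 1, q.eval z ≠ 0) ∧
    ∀ z ∈ closedBall (0 : ℂ) 1, ‖f z - p.eval z / q.eval z‖ ≤ t}


/-! ### Basic facts on the lacunary series -/

/-- The partial sums of the lacunary series, as polynomials. -/
def lacPoly (n : ℕ) : Polynomial ℂ :=
  ∑ j ∈ Finset.range n,
    Polynomial.C (((2 : ℂ) ^ (Nat.factorial j))⁻¹) * Polynomial.X ^ (Nat.factorial (j + 1))

lemma lacPoly_eval (n : ℕ) (z : ℂ) : (lacPoly n).eval z =
    ∑ j ∈ Finset.range n, ((2 : ℂ) ^ (Nat.factorial j))⁻¹ * z ^ (Nat.factorial (j + 1)) := by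
  simp [lacPoly, Polynomial.eval_finsetSum]

lemma lacPoly_natDegree (n : ℕ) : (lacPoly n).natDegree ≤ Nat.factorial n := by
  unfold lacPoly
  apply Polynomial.natDegree_sum_le_of_forall_le
  intro j hj
  refine (Polynomial.natDegree_C_mul_X_pow_le _ _).trans ?_
  exact Nat.factorial_le (Finset.mem_range.1 hj)

lemma lac_term_bound {n : ℕ} (hn : 1 ≤ n) (i : ℕ) {z : ℂ} (hz : z ∈ closedBall (0 : ℂ) 1) :
    ‖((2 : ℂ) ^ (Nat.factorial (i + n)))⁻¹ * z ^ (Nat.factorial (i + n + 1))‖ ≤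
      (1 / 2) ^ (Nat.factorial n) * (1 / 2 : ℝ) ^ i := by
  have hz' : ‖z‖ ≤ 1 := by simpa using hz
  rw [norm_mul, norm_inv, norm_pow, norm_pow]
  have h1 : ‖z‖ ^ (Nat.factorial (i + n + 1)) ≤ 1 := pow_le_one₀ (norm_nonneg _) hz'
  have h2 : (‖(2 : ℂ)‖ ^ (Nat.factorial (i + n)))⁻¹ = (1 / 2 : ℝ) ^ (Nat.factorial (i + n)) := by
    simp
  rw [h2, ← pow_add]
  have h3 : (1 / 2 : ℝ) ^ (Nat.factorial (i + n)) ≤ (1 / 2 : ℝ) ^ (Nat.factorial n + i) := by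
    apply pow_le_pow_of_le_one (by norm_num) (by norm_num)
    have := Nat.add_factorial_le_factorial_add i hn
    omega
  calc _ ≤ (1 / 2 : ℝ) ^ (Nat.factorial (i + n)) * 1 := by gcongr
    _ ≤ _ := by rw [mul_one]; exact h3

lemma lac_summable {z : ℂ} (hz : z ∈ closedBall (0 : ℂ) 1) :
    Summable (fun j : ℕ => ((2 : ℂ) ^ (Nat.factorial j))⁻¹ * z ^ (Nat.factorial (j + 1))) := by
  rw [← summable_nat_add_iff 1]
  refine Summable.of_norm_bounded (g := fun i => (1 / 2) ^ (Nat.factorial 1) * (1 / 2 : ℝ) ^ i) ?_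
    (fun i => lac_term_bound le_rfl i hz)
  exact (summable_geometric_of_lt_one (by norm_num) (by norm_num)).mul_left _

lemma lac_tail {n : ℕ} (hn : 1 ≤ n) {z : ℂ} (hz : z ∈ closedBall (0 : ℂ) 1) :
    ‖lacunaryF z - (lacPoly n).eval z‖ ≤ 2 * (1 / 2) ^ (Nat.factorial n) := by
  have h := (lac_summable hz).sum_add_tsum_nat_add n
  rw [lacPoly_eval]
  have h' : lacunaryF z - ∑ j ∈ Finset.range n,
      ((2 : ℂ) ^ (Nat.factorial j))⁻¹ * z ^ (Nat.factorial (j + 1)) =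
      ∑' i : ℕ, ((2 : ℂ) ^ (Nat.factorial (i + n)))⁻¹ * z ^ (Nat.factorial (i + n + 1)) := by
    unfold lacunaryF
    rw [← h]; ring
  rw [h']
  have hs : HasSum (fun i : ℕ => (1 / 2) ^ (Nat.factorial n) * (1 / 2 : ℝ) ^ i)
      ((1 / 2) ^ (Nat.factorial n) * 2) := by
    apply HasSum.mul_left
    exact hasSum_geometric_two
  refine (tsum_of_norm_bounded hs (fun i => lac_term_bound hn i hz)).trans ?_
  rw [mul_comm]

lemma lac_tendsto :
    TendstoUniformlyOn (fun (n : ℕ) z => (lacPoly n).eval z) lacunaryF atTop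
      (closedBall (0 : ℂ) 1) := by
  rw [Metric.tendstoUniformlyOn_iff]
  intro ε hε
  have h1 : Tendsto (fun n : ℕ => 2 * (1 / 2 : ℝ) ^ n) atTop (nhds (2 * 0)) :=
    (tendsto_pow_atTop_nhds_zero_of_lt_one (by norm_num) (by norm_num)).const_mul _
  rw [mul_zero] at h1
  filter_upwards [h1.eventually_lt_const hε, eventually_ge_atTop 1] with n hn hn1 z hz
  rw [dist_eq_norm]
  refine ((lac_tail hn1 hz).trans ?_).trans_lt hn
  have := Nat.self_le_factorial n
  exact mul_le_mul_of_nonneg_left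
    (pow_le_pow_of_le_one (by norm_num) (by norm_num) this) (by norm_num)

lemma lac_continuousOn : ContinuousOn lacunaryF (closedBall (0 : ℂ) 1) :=
  lac_tendsto.continuousOn (Frequently.of_forall fun n => (lacPoly n).continuous.continuousOn)

lemma lac_differentiableOn : DifferentiableOn ℂ lacunaryF (ball (0 : ℂ) 1) := by
  have h := (lac_tendsto.mono ball_subset_closedBall).tendstoLocallyUniformlyOn
  exact h.differentiableOn
    (Eventually.of_forall fun n => (lacPoly n).differentiable.differentiableOn) isOpen_ball

lemma lac_norm_le {z : ℂ} (hz : z ∈ closedBall (0 : ℂ) 1) : ‖lacunaryF z‖ ≤ 2 := by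
  have h := lac_tail (n := 1) le_rfl hz
  have hz' : ‖z‖ ≤ 1 := by simpa using hz
  have h2 : ‖(lacPoly 1).eval z‖ ≤ 1 := by
    rw [lacPoly_eval]
    simp
    linarith
  have := norm_le_norm_sub_add (lacunaryF z) ((lacPoly 1).eval z)
  norm_num at h
  linarith

lemma lacPoly_norm_le {n : ℕ} (hn : 1 ≤ n) {z : ℂ} (hz : z ∈ closedBall (0 : ℂ) 1) :
    ‖(lacPoly n).eval z‖ ≤ 3 := by
  have h := lac_tail hn hz
  have h1 := lac_norm_le hz
  have h2 := norm_le_norm_sub_add ((lacPoly n).eval z) (lacunaryF z)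
  rw [norm_sub_rev] at h2
  have h3 : (1 / 2 : ℝ) ^ (Nat.factorial n) ≤ (1 / 2) ^ 1 :=
    pow_le_pow_of_le_one (by norm_num) (by norm_num) (Nat.factorial_pos n)
  linarith

/-- On the slightly larger disk the partial sum is still under control. -/
lemma lacPoly_norm_le_big {n : ℕ} {r : ℝ} (hr1 : 1 ≤ r) (hr : r ^ n = 2)
    {z : ℂ} (hz : ‖z‖ ≤ r) : ‖(lacPoly n).eval z‖ ≤ n := by
  rw [lacPoly_eval]
  refine (norm_sum_le _ _).trans ?_
  have : ∀ j ∈ Finset.range n,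
      ‖((2 : ℂ) ^ (Nat.factorial j))⁻¹ * z ^ (Nat.factorial (j + 1))‖ ≤ 1 := by
    intro j hj
    have hj' : j + 1 ≤ n := Finset.mem_range.1 hj
    rw [norm_mul, norm_inv, norm_pow, norm_pow]
    have h1 : ‖z‖ ^ (Nat.factorial (j + 1)) ≤ 2 ^ (Nat.factorial j) := by
      calc ‖z‖ ^ (Nat.factorial (j + 1)) ≤ r ^ (Nat.factorial (j + 1)) := by gcongr
        _ ≤ r ^ (n * Nat.factorial j) := by
            apply pow_le_pow_right₀ hr1
            rw [Nat.factorial_succ]; gcongr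
        _ = 2 ^ (Nat.factorial j) := by rw [pow_mul, hr]
    have h2 : ‖(2 : ℂ)‖ = 2 := by simp
    rw [h2, inv_mul_le_iff₀ (by positivity), mul_one]
    exact h1
  refine (Finset.sum_le_sum this).trans ?_
  simp

lemma rhoDisk_nonneg (f : ℂ → ℂ) (k : ℕ) : 0 ≤ rhoDisk f k := by
  apply Real.sInf_nonneg
  rintro t ⟨p, q, -, -, -, h⟩
  exact (norm_nonneg _).trans (h 0 (by simp))

lemma rhoDisk_lac_le {n : ℕ} (hn : 1 ≤ n) :
    rhoDisk lacunaryF (Nat.factorial n) ≤ 2 * (1 / 2) ^ (Nat.factorial n) := by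
  apply csInf_le
  · refine ⟨0, ?_⟩
    rintro t ⟨p, q, -, -, -, h⟩
    exact (norm_nonneg _).trans (h 0 (by simp))
  · refine ⟨lacPoly n, 1, lacPoly_natDegree n, by simp, by simp, fun z hz => ?_⟩
    simpa using lac_tail hn hz

lemma lac_gonchar : Filter.liminf (fun k : ℕ => (rhoDisk lacunaryF k) ^ (1 / (k : ℝ)))
      Filter.atTop < 1 := by
  refine lt_of_le_of_lt (b := (3 / 4 : ℝ)) ?_ (by norm_num)
  apply liminf_le_of_frequently_le
  · rw [frequently_atTop]
    intro a
    refine ⟨Nat.factorial (a + 2), ?_, ?_⟩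
    · have := Nat.self_le_factorial (a + 2); omega
    · have hN : 2 ≤ Nat.factorial (a + 2) := by
        have := Nat.self_le_factorial (a + 2); omega
      have h := rhoDisk_lac_le (n := a + 2) (by omega)
      generalize Nat.factorial (a + 2) = N at *
      have hN0 : (N : ℝ) ≠ 0 := by positivity
      have h2 : rhoDisk lacunaryF N ≤ (3 / 4 : ℝ) ^ N := by
        refine h.trans ?_
        obtain ⟨m, rfl⟩ := Nat.exists_eq_add_of_le hN
        have : (1 / 2 : ℝ) ^ m ≤ (3 / 4) ^ m :=
          pow_le_pow_left₀ (by norm_num) (by norm_num) m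
        rw [pow_add, pow_add]
        have h0 : (0 : ℝ) ≤ (3 / 4) ^ m := by positivity
        nlinarith
      calc (rhoDisk lacunaryF N) ^ (1 / (N : ℝ)) ≤ ((3 / 4 : ℝ) ^ N) ^ (1 / (N : ℝ)) :=
            Real.rpow_le_rpow (rhoDisk_nonneg _ _) h2 (by positivity)
        _ = 3 / 4 := by
            rw [one_div, Real.pow_rpow_inv_natCast (by norm_num) (by omega)]
  · refine ⟨0, ?_⟩
    simp only [eventually_map]
    exact Eventually.of_forall fun k => Real.rpow_nonneg (rhoDisk_nonneg _ _) _

/-! ### Algebraic and analytic lemmas -/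

lemma exists_kill {ι : Type*} [Fintype ι] (e : ι → Polynomial ℂ) (m : ℕ)
    (hm : m < Fintype.card ι) :
    ∃ b : ι → ℂ, (∀ i, ‖b i‖ ≤ 1) ∧ (∃ i, ‖b i‖ = 1) ∧
      (Polynomial.X : Polynomial ℂ) ^ m ∣ ∑ i, b i • e i := by
  let L : (ι → ℂ) →ₗ[ℂ] (Fin m → ℂ) :=
    { toFun := fun b k => (∑ i, b i • e i).coeff k
      map_add' := by
        intro a b; ext k
        simp [Polynomial.finsetSum_coeff, add_mul, Finset.sum_add_distrib]
      map_smul' := by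
        intro c b; ext k
        simp [Polynomial.finsetSum_coeff, mul_assoc, Finset.mul_sum] }
  have hker : LinearMap.ker L ≠ ⊥ := by
    apply LinearMap.ker_ne_bot_of_finrank_lt
    simpa using hm
  obtain ⟨b, hb, hb0⟩ := Submodule.exists_mem_ne_zero_of_ne_bot hker
  have hbn : ‖b‖ ≠ 0 := norm_ne_zero_iff.2 hb0
  have hι : Nonempty ι := Fintype.card_pos_iff.1 (by omega)
  let c : ι → ℂ := ((‖b‖ : ℂ)⁻¹) • b
  have hc : ‖c‖ = 1 := by
    simp only [c, norm_smul, norm_inv, Complex.norm_real, norm_norm]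
    exact inv_mul_cancel₀ hbn
  have hcL : L c = 0 := by
    simp only [c, map_smul]
    rw [LinearMap.mem_ker.1 hb, smul_zero]
  refine ⟨c, fun i => (norm_le_pi_norm c i).trans hc.le, ?_, ?_⟩
  · obtain ⟨i, hi⟩ := Finite.exists_max (fun i => ‖c i‖)
    refine ⟨i, le_antisymm ((norm_le_pi_norm c i).trans hc.le) ?_⟩
    rw [← hc]
    exact (pi_norm_le_iff_of_nonneg (norm_nonneg _)).2 hi
  · rw [Polynomial.X_pow_dvd_iff]
    intro k hk
    exact congrFun hcL ⟨k, hk⟩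

lemma exists_coeff_le (q : Polynomial ℂ) (i : ℕ) :
    ∃ s : ℂ, ‖s‖ ≤ 1 ∧ ‖q.coeff i‖ ≤ ‖q.eval s‖ := by
  obtain ⟨s, hs, hmax⟩ := (isCompact_sphere (0 : ℂ) 1).exists_isMaxOn
    (NormedSpace.sphere_nonempty.2 zero_le_one) (q.continuous.norm.continuousOn)
  refine ⟨s, by simpa using (mem_sphere_zero_iff_norm.1 hs).le, ?_⟩
  have h := Complex.norm_iteratedDeriv_le_of_forall_mem_sphere_norm_le (c := (0 : ℂ)) (R := 1)
    (C := ‖q.eval s‖) (f := fun x => q.eval x) i one_pos q.differentiable.diffContOnCl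
    (fun z hz => hmax hz)
  have h2 : ∀ (k : ℕ), iteratedDeriv k (fun x => q.eval x) =
      fun x => (Polynomial.derivative^[k] q).eval x := by
    intro k
    induction k with
    | zero => simp
    | succ k ih =>
      rw [iteratedDeriv_succ, ih, Function.iterate_succ_apply']
      ext x
      simp
  rw [h2] at h
  simp only [← Polynomial.coeff_zero_eq_eval_zero, Polynomial.coeff_iterate_derivative] at h
  simp only [zero_add, Nat.descFactorial_self, nsmul_eq_mul, norm_mul, Complex.norm_natCast,
    one_pow, div_one] at h
  have hpos : (0 : ℝ) < (Nat.factorial i : ℝ) := by positivity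
  exact le_of_mul_le_mul_left h hpos

/-- Two-variable version: a double sum takes a value at least as large as each coefficient. -/
lemma exists_coeff_le_two {d : ℕ} (b : Fin d × Fin d → ℂ) (ij : Fin d × Fin d) :
    ∃ s t : ℂ, ‖s‖ ≤ 1 ∧ ‖t‖ ≤ 1 ∧
      ‖b ij‖ ≤ ‖∑ x : Fin d × Fin d, b x * (s ^ (x.1 : ℕ) * t ^ (x.2 : ℕ))‖ := by
  obtain ⟨i, j⟩ := ij
  have key : ∀ (c : Fin d → ℂ) (k : Fin d), ∃ s : ℂ, ‖s‖ ≤ 1 ∧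
      ‖c k‖ ≤ ‖∑ l, c l * s ^ (l : ℕ)‖ := by
    intro c k
    obtain ⟨s, hs, h⟩ := exists_coeff_le
      (∑ l : Fin d, Polynomial.C (c l) * Polynomial.X ^ (l : ℕ)) k
    refine ⟨s, hs, ?_⟩
    simpa [Polynomial.eval_finsetSum, Polynomial.finsetSum_coeff, Polynomial.coeff_X_pow,
      Fin.val_inj] using h
  obtain ⟨s, hs, h1⟩ := key (fun l => b (l, j)) i
  obtain ⟨t, ht, h2⟩ := key (fun m => ∑ l, b (l, m) * s ^ (l : ℕ)) j
  refine ⟨s, t, hs, ht, (h1.trans h2).trans (le_of_eq ?_)⟩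
  congr 1
  rw [Fintype.sum_prod_type_right]
  refine Finset.sum_congr rfl fun m _ => ?_
  rw [Finset.sum_mul]
  refine Finset.sum_congr rfl fun l _ => ?_
  ring

/-- Schwarz lemma for polynomials with a zero of high order at the origin. -/
lemma schwarz_poly (G : Polynomial ℂ) (m : ℕ) (hG : (Polynomial.X : Polynomial ℂ) ^ m ∣ G)
    {r B : ℝ} (hr : 1 ≤ r) (hB : ∀ z : ℂ, ‖z‖ ≤ r → ‖G.eval z‖ ≤ B)
    {z : ℂ} (hz : ‖z‖ ≤ 1) : ‖G.eval z‖ ≤ B / r ^ m := by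
  obtain ⟨H, rfl⟩ := hG
  have hr0 : 0 < r := by linarith
  have hH : ‖H.eval z‖ ≤ B / r ^ m := by
    refine Complex.norm_le_of_forall_mem_frontier_norm_le (U := ball (0 : ℂ) r)
      isBounded_ball H.differentiable.diffContOnCl ?_ ?_
    · intro w hw
      rw [frontier_ball _ hr0.ne', mem_sphere_zero_iff_norm] at hw
      have := hB w hw.le
      rw [Polynomial.eval_mul, Polynomial.eval_pow, Polynomial.eval_X, norm_mul, norm_pow, hw]
        at this
      rw [le_div_iff₀ (by positivity)]
      linarith
    · rw [closure_ball _ hr0.ne', mem_closedBall_zero_iff]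
      exact hz.trans hr
  rw [Polynomial.eval_mul, Polynomial.eval_pow, Polynomial.eval_X, norm_mul, norm_pow]
  calc ‖z‖ ^ m * ‖H.eval z‖ ≤ 1 * ‖H.eval z‖ := by
        gcongr; exact pow_le_one₀ (norm_nonneg _) hz
    _ ≤ _ := by rwa [one_mul]

/-! ### The basic step: a polynomial which is very small on the graph -/

lemma dsum_bound {d : ℕ} {b : Fin d × Fin d → ℂ} (hb : ∀ i, ‖b i‖ ≤ 1) {s t : ℂ} {S T : ℝ}
    (hS : 1 ≤ S) (hT : 1 ≤ T) (hs : ‖s‖ ≤ S) (ht : ‖t‖ ≤ T) :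
    ‖∑ x : Fin d × Fin d, b x * (s ^ (x.1 : ℕ) * t ^ (x.2 : ℕ))‖ ≤
      (d : ℝ) ^ 2 * (S ^ d * T ^ d) := by
  refine (norm_sum_le _ _).trans ?_
  have : ∀ x ∈ (Finset.univ : Finset (Fin d × Fin d)),
      ‖b x * (s ^ (x.1 : ℕ) * t ^ (x.2 : ℕ))‖ ≤ S ^ d * T ^ d := by
    intro x _
    rw [norm_mul, norm_mul, norm_pow, norm_pow]
    have h1 : ‖s‖ ^ (x.1 : ℕ) ≤ S ^ d :=
      (pow_le_pow_left₀ (norm_nonneg _) hs _).trans (pow_le_pow_right₀ hS x.1.2.le)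
    have h2 : ‖t‖ ^ (x.2 : ℕ) ≤ T ^ d :=
      (pow_le_pow_left₀ (norm_nonneg _) ht _).trans (pow_le_pow_right₀ hT x.2.2.le)
    calc _ ≤ 1 * (S ^ d * T ^ d) := by
          gcongr
          exact hb x
      _ = _ := one_mul _
  refine (Finset.sum_le_sum this).trans ?_
  simp [pow_two]

lemma pow_sub_bound {a b : ℂ} {K : ℝ} (hK : 1 ≤ K) (ha : ‖a‖ ≤ K) (hb : ‖b‖ ≤ K) (j : ℕ) :
    ‖a ^ j - b ^ j‖ ≤ j * K ^ j * ‖a - b‖ := by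
  induction j with
  | zero => simp
  | succ j ih =>
    have h : a ^ (j + 1) - b ^ (j + 1) = a * (a ^ j - b ^ j) + (a - b) * b ^ j := by ring
    rw [h]
    have hbj : ‖b‖ ^ j ≤ K ^ (j + 1) :=
      (pow_le_pow_left₀ (norm_nonneg _) hb _).trans (pow_le_pow_right₀ hK (by omega))
    calc ‖a * (a ^ j - b ^ j) + (a - b) * b ^ j‖
        ≤ ‖a‖ * ‖a ^ j - b ^ j‖ + ‖a - b‖ * ‖b‖ ^ j := by
          refine (norm_add_le _ _).trans ?_
          rw [norm_mul, norm_mul, norm_pow]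
      _ ≤ K * (j * K ^ j * ‖a - b‖) + ‖a - b‖ * K ^ (j + 1) := by gcongr
      _ = _ := by push_cast; ring

lemma dsum_lip {d : ℕ} {b : Fin d × Fin d → ℂ} (hb : ∀ i, ‖b i‖ ≤ 1) {s t t' : ℂ} {K : ℝ}
    (hK : 1 ≤ K) (hs : ‖s‖ ≤ K) (ht : ‖t‖ ≤ K) (ht' : ‖t'‖ ≤ K) :
    ‖∑ x : Fin d × Fin d, b x * (s ^ (x.1 : ℕ) * t ^ (x.2 : ℕ)) -
      ∑ x : Fin d × Fin d, b x * (s ^ (x.1 : ℕ) * t' ^ (x.2 : ℕ))‖ ≤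
      (d : ℝ) ^ 2 * (K ^ d * (d * K ^ d * ‖t - t'‖)) := by
  rw [← Finset.sum_sub_distrib]
  refine (norm_sum_le _ _).trans ?_
  have : ∀ x ∈ (Finset.univ : Finset (Fin d × Fin d)),
      ‖b x * (s ^ (x.1 : ℕ) * t ^ (x.2 : ℕ)) - b x * (s ^ (x.1 : ℕ) * t' ^ (x.2 : ℕ))‖ ≤
        K ^ d * (d * K ^ d * ‖t - t'‖) := by
    intro x _
    rw [← mul_sub, ← mul_sub, norm_mul, norm_mul, norm_pow]
    have h1 : ‖s‖ ^ (x.1 : ℕ) ≤ K ^ d :=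
      (pow_le_pow_left₀ (norm_nonneg _) hs _).trans (pow_le_pow_right₀ hK x.1.2.le)
    have h2 : ‖t ^ (x.2 : ℕ) - t' ^ (x.2 : ℕ)‖ ≤ d * K ^ d * ‖t - t'‖ := by
      refine (pow_sub_bound hK ht ht' _).trans ?_
      have h3 : ((x.2 : ℕ) : ℝ) ≤ d := by exact_mod_cast x.2.2.le
      have h4 : K ^ (x.2 : ℕ) ≤ K ^ d := pow_le_pow_right₀ hK x.2.2.le
      gcongr
    calc _ ≤ 1 * (K ^ d * (d * K ^ d * ‖t - t'‖)) := by
          gcongr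
          exact hb x
      _ = _ := one_mul _
  refine (Finset.sum_le_sum this).trans ?_
  simp [pow_two]

lemma exists_n (A c : ℝ) (hA : 1 ≤ A) (hc : 0 < c) :
    ∃ n : ℕ, 1 ≤ n ∧ n ^ 3 ≤ Nat.factorial n ∧
      c * (n : ℝ) ^ 6 * (A * n) ^ (n ^ 2) ≤ 2 ^ (n ^ 3) := by
  have hpow : ∀ (k : ℕ) (a : ℝ), 0 < a → ∀ᶠ n : ℕ in atTop, a * (n : ℝ) ^ k ≤ 2 ^ n := by
    intro k a ha
    have h := tendsto_pow_const_div_const_pow_of_one_lt k (r := (2 : ℝ)) (by norm_num)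
    filter_upwards [h.eventually_lt_const (inv_pos.2 ha)] with n hn
    rw [div_lt_iff₀ (by positivity)] at hn
    rw [← le_inv_mul_iff₀ ha]
    exact hn.le
  have hfac : ∀ᶠ n : ℕ in atTop, (2 : ℝ) ^ n ≤ Nat.factorial n := by
    have h := FloorSemiring.tendsto_pow_div_factorial_atTop (2 : ℝ)
    filter_upwards [h.eventually_lt_const one_pos] with n hn
    rw [div_lt_one (by positivity)] at hn
    exact hn.le
  obtain ⟨n, h1, h2, h3, h4, h5⟩ := ((eventually_ge_atTop 1).and ((hpow 3 1 one_pos).and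
    (hfac.and ((hpow 6 c hc).and (hpow 1 (2 * A) (by positivity)))))).exists
  refine ⟨n, h1, ?_, ?_⟩
  · have : ((n ^ 3 : ℕ) : ℝ) ≤ Nat.factorial n := by push_cast; linarith
    exact_mod_cast this
  · have h6 : c * (n : ℝ) ^ 6 ≤ 2 ^ (n ^ 2) :=
      h4.trans (pow_le_pow_right₀ (by norm_num) (Nat.le_self_pow (by norm_num) n))
    calc c * (n : ℝ) ^ 6 * (A * n) ^ (n ^ 2) ≤ 2 ^ (n ^ 2) * (A * n) ^ (n ^ 2) := by gcongr
      _ = (2 * A * (n : ℝ) ^ 1) ^ (n ^ 2) := by rw [← mul_pow]; ring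
      _ ≤ (2 ^ n) ^ (n ^ 2) := by gcongr
      _ = 2 ^ (n ^ 3) := by rw [← pow_mul]; ring

lemma step_exists (x0 : ℂ × ℂ) {ρ δ : ℝ} (hρ : 0 < ρ) (hδ : 0 < δ) :
    ∃ (P : ℂ × ℂ → ℂ) (m : ℕ), 0 < m ∧ Differentiable ℂ P ∧
      (∀ x, ‖P x‖ ≤ Real.exp (m * (δ * (1 + ‖x‖)))) ∧
      (∀ z ∈ closedBall (0 : ℂ) 1, ‖P (z, lacunaryF z)‖ ≤ Real.exp (-m)) ∧
      ∃ x ∈ closedBall x0 ρ, 1 ≤ ‖P x‖ := by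
  obtain ⟨z0, w0⟩ := x0
  set D : ℝ := ‖((z0, w0) : ℂ × ℂ)‖ with hD
  have hD0 : 0 ≤ D := norm_nonneg _
  have hz0 : ‖z0‖ ≤ D := norm_fst_le ((z0, w0) : ℂ × ℂ)
  have hw0 : ‖w0‖ ≤ D := norm_snd_le ((z0, w0) : ℂ × ℂ)
  -- constants
  obtain ⟨L, hL⟩ := exists_nat_ge (2 * (1 + (1 + D) / ρ) / δ)
  have hL0 : 0 < L := by
    have : (0 : ℝ) < L := lt_of_lt_of_le (by positivity) hL
    exact_mod_cast this
  set K : ℝ := (3 + D) / ρ + 1 with hK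
  have hK1 : 1 ≤ K := by
    have : 0 ≤ (3 + D) / ρ := by positivity
    linarith
  have hshift : ∀ (a c : ℂ) (R : ℝ), ‖a‖ ≤ R → ‖c‖ ≤ D →
      ‖(ρ : ℂ)⁻¹ * (a - c)‖ ≤ (R + D) / ρ := by
    intro a c R ha hc
    rw [norm_mul, norm_inv, Complex.norm_real, Real.norm_of_nonneg hρ.le, ← div_eq_inv_mul]
    gcongr
    exact (norm_sub_le _ _).trans (add_le_add ha hc)
  have hA : 1 ≤ K ^ 2 * Real.exp L := by
    have h1 : 1 ≤ K ^ 2 := one_le_pow₀ hK1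
    have h2 : 1 ≤ Real.exp L := Real.one_le_exp (by positivity)
    nlinarith
  obtain ⟨n, hn1, hn3, hnum⟩ := exists_n (K ^ 2 * Real.exp L) (4 * (1 + ρ⁻¹)) hA (by positivity)
  have hn1' : (1 : ℝ) ≤ n := by exact_mod_cast hn1
  set d : ℕ := n ^ 2 with hd
  have hd1 : 1 ≤ d := Nat.one_le_pow _ _ hn1
  -- the polynomial
  let e : Fin d × Fin d → Polynomial ℂ := fun x =>
    (Polynomial.C (ρ : ℂ)⁻¹ * (Polynomial.X - Polynomial.C z0)) ^ (x.1 : ℕ) *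
    (Polynomial.C (ρ : ℂ)⁻¹ * (lacPoly n - Polynomial.C w0)) ^ (x.2 : ℕ)
  have hcard : n * (n ^ 3 - 1) < Fintype.card (Fin d × Fin d) := by
    simp only [Fintype.card_prod, Fintype.card_fin, hd]
    obtain ⟨k, hk⟩ : ∃ k, n ^ 3 = k + 1 := ⟨n ^ 3 - 1, by
      have := Nat.one_le_pow 3 n hn1; omega⟩
    have : n ^ 2 * n ^ 2 = n * (k + 1) := by rw [← hk]; ring
    rw [this, hk]
    simp only [Nat.add_sub_cancel]
    exact Nat.mul_lt_mul_of_pos_left (by omega) (by omega)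
  obtain ⟨b, hb, ⟨ij, hij⟩, hdvd⟩ := exists_kill e _ hcard
  let P : ℂ × ℂ → ℂ := fun x => ∑ y : Fin d × Fin d,
    b y * (((ρ : ℂ)⁻¹ * (x.1 - z0)) ^ (y.1 : ℕ) * ((ρ : ℂ)⁻¹ * (x.2 - w0)) ^ (y.2 : ℕ))
  have hPG : ∀ z, P (z, (lacPoly n).eval z) = (∑ y, b y • e y).eval z := by
    intro z
    simp [P, e, Polynomial.eval_finsetSum, Polynomial.eval_smul]
  refine ⟨P, L * d, by positivity, ?_, ?_, ?_, ?_⟩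
  · simp only [P]
    fun_prop
  · intro x
    have hx1 : ‖x.1‖ ≤ ‖x‖ := norm_fst_le x
    have hx2 : ‖x.2‖ ≤ ‖x‖ := norm_snd_le x
    set y : ℝ := (‖x‖ + D) / ρ with hy
    have hy0 : 0 ≤ y := by positivity
    have hye : y ≤ Real.exp y := by linarith [Real.add_one_le_exp y]
    have h1 := dsum_bound (d := d) hb (Real.one_le_exp hy0) (Real.one_le_exp hy0)
      ((hshift x.1 z0 _ hx1 hz0).trans hye) ((hshift x.2 w0 _ hx2 hw0).trans hye)
    refine h1.trans ?_
    have hde : (d : ℝ) ≤ Real.exp d := by linarith [Real.add_one_le_exp (d : ℝ)]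
    calc (d : ℝ) ^ 2 * (Real.exp y ^ d * Real.exp y ^ d)
        ≤ (Real.exp d) ^ 2 * (Real.exp y ^ d * Real.exp y ^ d) := by gcongr
      _ = Real.exp (d * (2 * (1 + y))) := by
          rw [← Real.exp_nat_mul, ← Real.exp_nat_mul, ← Real.exp_add, ← Real.exp_add]
          congr 1; push_cast; ring
      _ ≤ _ := by
          apply Real.exp_le_exp.2
          have h2 : 2 * (1 + (1 + D) / ρ) ≤ L * δ := by rwa [div_le_iff₀ hδ] at hL
          have h3 : 1 + y ≤ (1 + (1 + D) / ρ) * (1 + ‖x‖) := by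
            rw [hy]
            have e1 : (1 + (1 + D) / ρ) * (1 + ‖x‖) - (1 + (‖x‖ + D) / ρ) =
              ‖x‖ + (1 + D * ‖x‖) / ρ := by field_simp; ring
            have : 0 ≤ ‖x‖ + (1 + D * ‖x‖) / ρ := by positivity
            linarith
          have h4 : 2 * (1 + y) ≤ L * δ * (1 + ‖x‖) := by
            calc 2 * (1 + y) ≤ 2 * ((1 + (1 + D) / ρ) * (1 + ‖x‖)) := by linarith
              _ = 2 * (1 + (1 + D) / ρ) * (1 + ‖x‖) := by ring
              _ ≤ _ := by gcongr
          calc (d : ℝ) * (2 * (1 + y)) ≤ d * (L * δ * (1 + ‖x‖)) := by gcongr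
            _ = _ := by push_cast; ring
  · intro z hz
    have hz1 : ‖z‖ ≤ 1 := by simpa using hz
    -- first part: the polynomial on the graph of the partial sum
    have hA1 : ‖P (z, (lacPoly n).eval z)‖ ≤ Real.exp (-(L * d : ℕ)) / 2 := by
      set r : ℝ := (2 : ℝ) ^ ((n : ℝ)⁻¹) with hr
      have hrn : r ^ n = 2 := Real.rpow_inv_natCast_pow (by norm_num) (by omega)
      have hr1 : 1 ≤ r := Real.one_le_rpow (by norm_num) (by positivity)
      have hr2 : r ≤ 2 := by
        calc r ≤ r ^ n := le_self_pow₀ hr1 (by omega)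
          _ = 2 := hrn
      rw [hPG]
      have hB : ∀ ζ : ℂ, ‖ζ‖ ≤ r → ‖(∑ y, b y • e y).eval ζ‖ ≤
          (d : ℝ) ^ 2 * (K ^ d * (n * K) ^ d) := by
        intro ζ hζ
        rw [← hPG]
        refine dsum_bound hb hK1 (by nlinarith) ?_ ?_
        · refine (hshift ζ z0 2 (hζ.trans hr2) hz0).trans ?_
          have : (2 + D) / ρ ≤ (3 + D) / ρ := by gcongr; norm_num
          linarith
        · refine (hshift _ w0 n (lacPoly_norm_le_big hr1 hrn hζ) hw0).trans ?_
          have h1 : (n + D) / ρ ≤ n * ((3 + D) / ρ) := by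
            rw [← mul_div_assoc]
            gcongr
            nlinarith
          have h2 : (n : ℝ) * ((3 + D) / ρ) ≤ n * K := by gcongr; linarith
          exact h1.trans h2
      refine (schwarz_poly _ _ hdvd hr1 hB hz1).trans ?_
      rw [pow_mul, hrn]
      have h2 : (2 : ℝ) ^ (n ^ 3) = 2 ^ (n ^ 3 - 1) * 2 := by
        rw [← pow_succ]
        congr 1
        have := Nat.one_le_pow 3 n hn1; omega
      rw [div_le_iff₀ (by positivity), Real.exp_neg, div_mul_eq_mul_div, le_div_iff₀ (by norm_num),
        ← div_eq_inv_mul, le_div_iff₀ (by positivity)]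
      have hexp : Real.exp ((L * d : ℕ) : ℝ) = Real.exp L ^ d := by
        rw [← Real.exp_nat_mul]; congr 1; push_cast; ring
      have h3 : (d : ℝ) ^ 2 * (K ^ d * (n * K) ^ d) * 2 * Real.exp ((L * d : ℕ) : ℝ) * 2 ≤
          2 ^ (n ^ 3) := by
        refine le_trans ?_ hnum
        have h4 : (d : ℝ) ^ 2 * (K ^ d * (n * K) ^ d) * 2 * Real.exp ((L * d : ℕ) : ℝ) * 2 =
            4 * (n : ℝ) ^ 4 * (K ^ 2 * Real.exp L * n) ^ d := by
          rw [hexp]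
          have : (d : ℝ) = (n : ℝ) ^ 2 := by rw [hd]; push_cast; ring
          rw [this]
          simp only [mul_pow]
          ring
        rw [h4]
        have h5 : (n : ℝ) ^ 4 ≤ (n : ℝ) ^ 6 := pow_le_pow_right₀ hn1' (by norm_num)
        have h6 : (1 : ℝ) ≤ 1 + ρ⁻¹ := by
          have : 0 < ρ⁻¹ := by positivity
          linarith
        gcongr
        linarith
      rw [h2] at h3
      linarith
    have hA2 : ‖P (z, lacunaryF z) - P (z, (lacPoly n).eval z)‖ ≤
        Real.exp (-(L * d : ℕ)) / 2 := by
      have hmono : ∀ R : ℝ, R ≤ 3 → (R + D) / ρ ≤ K := by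
        intro R hR
        have : (R + D) / ρ ≤ (3 + D) / ρ := by gcongr
        linarith
      have h1 := dsum_lip (d := d) hb hK1
        ((hshift z z0 1 hz1 hz0).trans (hmono 1 (by norm_num)))
        ((hshift (lacunaryF z) w0 2 (lac_norm_le hz) hw0).trans (hmono 2 (by norm_num)))
        ((hshift _ w0 3 (lacPoly_norm_le hn1 hz) hw0).trans (hmono 3 le_rfl))
      refine h1.trans ?_
      have h2 : ‖(ρ : ℂ)⁻¹ * (lacunaryF z - w0) - (ρ : ℂ)⁻¹ * ((lacPoly n).eval z - w0)‖ ≤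
          ρ⁻¹ * (2 / 2 ^ (n ^ 3)) := by
        rw [← mul_sub, sub_sub_sub_cancel_right, norm_mul, norm_inv, Complex.norm_real,
          Real.norm_of_nonneg hρ.le]
        gcongr
        refine (lac_tail hn1 hz).trans ?_
        rw [one_div, inv_pow, ← div_eq_mul_inv]
        gcongr
        norm_num
      have hexp : Real.exp ((L * d : ℕ) : ℝ) = Real.exp L ^ d := by
        rw [← Real.exp_nat_mul]; congr 1; push_cast; ring
      have h3 : (d : ℝ) ^ 2 * (K ^ d * (d * K ^ d * (ρ⁻¹ * 2))) * 2 * Real.exp ((L * d : ℕ) : ℝ)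
          ≤ 2 ^ (n ^ 3) := by
        refine le_trans ?_ hnum
        have h4 : (d : ℝ) ^ 2 * (K ^ d * (d * K ^ d * (ρ⁻¹ * 2))) * 2 *
            Real.exp ((L * d : ℕ) : ℝ) =
            4 * ρ⁻¹ * (n : ℝ) ^ 6 * (K ^ 2 * Real.exp L) ^ d := by
          rw [hexp]
          have : (d : ℝ) = (n : ℝ) ^ 2 := by rw [hd]; push_cast; ring
          rw [this]
          simp only [mul_pow]
          ring
        rw [h4]
        have h7 : K ^ 2 * Real.exp L ≤ K ^ 2 * Real.exp L * n := by nlinarith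
        gcongr
        linarith
      calc _ ≤ (d : ℝ) ^ 2 * (K ^ d * (d * K ^ d * (ρ⁻¹ * (2 / 2 ^ (n ^ 3))))) := by gcongr
        _ = (d : ℝ) ^ 2 * (K ^ d * (d * K ^ d * (ρ⁻¹ * 2))) / 2 ^ (n ^ 3) := by ring
        _ ≤ _ := by
          rw [div_le_iff₀ (by positivity), Real.exp_neg, div_mul_eq_mul_div,
            le_div_iff₀ (by norm_num), ← div_eq_inv_mul ((2 : ℝ) ^ (n ^ 3)),
            le_div_iff₀ (by positivity)]
          exact h3
    have h := norm_le_norm_sub_add (P (z, lacunaryF z)) (P (z, (lacPoly n).eval z))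
    linarith
  · obtain ⟨s, t, hs, ht, hst⟩ := exists_coeff_le_two b ij
    have hρc : (ρ : ℂ) ≠ 0 := by exact_mod_cast hρ.ne'
    refine ⟨(z0 + ρ * s, w0 + ρ * t), ?_, ?_⟩
    · rw [mem_closedBall, Prod.dist_eq, max_le_iff]
      have : ∀ a c : ℂ, ‖c‖ ≤ 1 → dist (a + ρ * c) a ≤ ρ := by
        intro a c hc
        rw [dist_eq_norm, add_sub_cancel_left, norm_mul, Complex.norm_real,
          Real.norm_of_nonneg hρ.le]
        nlinarith
      exact ⟨this _ _ hs, this _ _ ht⟩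
    · rw [← hij]
      simpa [P, hρc] using hst

/-! ### Construction of the plurisubharmonic function -/

lemma max_principle {Q : ℂ → ℂ} (hQ : Differentiable ℂ Q) {M : ℕ} (hM : 0 < M) {V : ℂ → ℝ}
    (hV0 : ∀ z, 0 ≤ V z) (hV : ∀ z, V z ^ M = ‖Q z‖) {c : ℂ} {r : ℝ} (hr : 0 < r)
    {h : ℂ → ℝ} (hh : ContinuousOn h (closedBall c r)) {F : ℂ → ℂ}
    (hF : DifferentiableOn ℂ F (ball c r)) (hhF : ∀ z ∈ ball c r, h z = (F z).re)
    (hle : ∀ z ∈ sphere c r, V z ≤ Real.exp (h z)) :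
    ∀ z ∈ closedBall c r, V z ≤ Real.exp (h z) := by
  set N : ℂ → ℝ := fun z => ‖Q z‖ * Real.exp (-(M * h z)) with hN
  have hNc : ContinuousOn N (closedBall c r) := by
    refine hQ.continuous.norm.continuousOn.mul (Real.continuous_exp.comp_continuousOn ?_)
    exact (continuousOn_const.mul hh).neg
  have hNs : ∀ z ∈ sphere c r, N z ≤ 1 := by
    intro z hz
    have h1 : ‖Q z‖ ≤ Real.exp (M * h z) := by
      rw [← hV, Real.exp_nat_mul]
      exact pow_le_pow_left₀ (hV0 z) (hle z hz) M
    simp only [hN]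
    rw [Real.exp_neg, ← div_eq_mul_inv, div_le_one (Real.exp_pos _)]
    exact h1
  obtain ⟨y, hy, hmax⟩ := (isCompact_closedBall c r).exists_isMaxOn
    (nonempty_closedBall.2 hr.le) hNc
  have hNy : N y ≤ 1 := by
    by_cases hys : y ∈ sphere c r
    · exact hNs y hys
    · have hyb : y ∈ ball c r := by
        rw [mem_closedBall] at hy
        rw [mem_sphere] at hys
        exact lt_of_le_of_ne hy hys
      set G : ℂ → ℂ := fun z => Q z * Complex.exp (-(M * F z)) with hG
      have hGN : ∀ z ∈ ball c r, ‖G z‖ = N z := by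
        intro z hz
        simp only [hG, hN, norm_mul, Complex.norm_exp, hhF z hz]
        simp
      have hGd : DifferentiableOn ℂ G (ball c r) :=
        hQ.differentiableOn.mul ((hF.const_mul _).neg.cexp)
      have hGmax : IsMaxOn (norm ∘ G) (ball c r) y := by
        intro z hz
        simp only [Set.mem_ofPred_eq, Function.comp, hGN z hz, hGN y hyb]
        exact hmax (ball_subset_closedBall hz)
      have hEq := Complex.norm_eqOn_of_isPreconnected_of_isMaxOn
        (convex_ball c r).isPreconnected isOpen_ball hGd hyb hGmax
      have hEqN : Set.EqOn N (fun _ => N y) (ball c r) := by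
        intro z hz
        have := hEq hz
        simp only [Function.comp, Function.const] at this
        rw [hGN z hz, hGN y hyb] at this
        exact this
      have hEqN' : Set.EqOn N (fun _ => N y) (closedBall c r) :=
        hEqN.of_subset_closure hNc continuousOn_const ball_subset_closedBall
          (by rw [closure_ball _ hr.ne'])
      obtain ⟨w, hw⟩ := (NormedSpace.sphere_nonempty (x := c)).2 hr.le
      have := hEqN' (sphere_subset_closedBall hw)
      exact (le_of_eq this.symm).trans (hNs w hw)
  intro z hz
  have h1 : N z ≤ 1 := (hmax hz).trans hNy
  simp only [hN] at h1
  rw [Real.exp_neg, ← div_eq_mul_inv, div_le_one (Real.exp_pos _), ← hV, Real.exp_nat_mul] at h1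
  exact le_of_pow_le_pow_left₀ hM.ne' (Real.exp_pos _).le h1

lemma log_ofReal_exp (a : ℝ) : ENNReal.log (ENNReal.ofReal (Real.exp a)) = (a : EReal) := by
  rw [ENNReal.log_ofReal_of_pos (Real.exp_pos _), Real.log_exp]

lemma log_ofReal_le {t a : ℝ} (h : t ≤ Real.exp a) :
    ENNReal.log (ENNReal.ofReal t) ≤ (a : EReal) := by
  rw [← log_ofReal_exp]
  exact ENNReal.log_le_log (ENNReal.ofReal_le_ofReal h)

lemma lt_of_log_ofReal {t a : ℝ} (h : ENNReal.log (ENNReal.ofReal t) < (a : EReal)) :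
    t < Real.exp a := by
  rw [← log_ofReal_exp, ENNReal.log_lt_log_iff, ENNReal.ofReal_lt_ofReal_iff (Real.exp_pos _)] at h
  exact h

lemma le_log_ofReal {t a : ℝ} (h : Real.exp a ≤ t) :
    (a : EReal) ≤ ENNReal.log (ENNReal.ofReal t) := by
  rw [← log_ofReal_exp]
  exact ENNReal.log_le_log (ENNReal.ofReal_le_ofReal h)

/-- A Dini type argument on a circle. -/
lemma dini_sphere {T : ℕ → ℂ → ℝ} {g : ℂ → ℝ} {c : ℂ} {r : ℝ} (hT : ∀ n, Continuous (T n))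
    (hanti : ∀ w, Antitone fun n => T n w) (hg : ContinuousOn g (sphere c r))
    (hlt : ∀ w ∈ sphere c r, ∃ n, T n w < Real.exp (g w)) :
    ∃ n, ∀ w ∈ sphere c r, T n w < Real.exp (g w) := by
  have hcs : CompactSpace (sphere c r) := isCompact_iff_compactSpace.1 (isCompact_sphere c r)
  have hgs : Continuous fun w : sphere c r => Real.exp (g w) :=
    Real.continuous_exp.comp (continuousOn_iff_continuous_restrict.1 hg)
  have hTs : ∀ n, Continuous fun w : sphere c r => T n w :=
    fun n => (hT n).comp continuous_subtype_val
  obtain ⟨n, hn⟩ := (isCompact_univ (X := sphere c r)).elim_directed_cover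
    (fun n => {w : sphere c r | T n w < Real.exp (g w)})
    (fun n => isOpen_lt (hTs n) hgs)
    (by
      intro w _
      obtain ⟨n, hn⟩ := hlt w w.2
      exact Set.mem_iUnion.2 ⟨n, hn⟩)
    (by
      refine Monotone.directed_le ?_
      intro i j hij w hw
      exact lt_of_le_of_lt (hanti _ hij) hw)
  exact ⟨n, fun w hw => hn (Set.mem_univ (⟨w, hw⟩ : sphere c r))⟩

/-- Finite products of roots of `‖P k‖`. -/
def prodE (P : ℕ → ℂ × ℂ → ℂ) (m : ℕ → ℕ) (n : ℕ) (x : ℂ × ℂ) : ℝ :=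
  ∏ k ∈ Finset.range n, ‖P k x‖ ^ ((m k : ℝ)⁻¹)

/-- The finite products with a correction making the sequence decreasing. -/
def prodT (P : ℕ → ℂ × ℂ → ℂ) (m : ℕ → ℕ) (n : ℕ) (x : ℂ × ℂ) : ℝ :=
  prodE P m n x * Real.exp (2 * (1 / 2) ^ n * (1 + ‖x‖))

/-- The plurisubharmonic function. -/
def limU (P : ℕ → ℂ × ℂ → ℂ) (m : ℕ → ℕ) (x : ℂ × ℂ) : EReal :=
  ⨅ n, ENNReal.log (ENNReal.ofReal (prodT P m n x))

section Construction

variable {P : ℕ → ℂ × ℂ → ℂ} {m : ℕ → ℕ}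

lemma prodE_nonneg (n : ℕ) (x : ℂ × ℂ) : 0 ≤ prodE P m n x :=
  Finset.prod_nonneg fun _ _ => Real.rpow_nonneg (norm_nonneg _) _

lemma prodE_le_prodT (n : ℕ) (x : ℂ × ℂ) : prodE P m n x ≤ prodT P m n x := by
  unfold prodT
  exact le_mul_of_one_le_right (prodE_nonneg n x) (Real.one_le_exp (by positivity))

lemma prodT_continuous (hd : ∀ k, Differentiable ℂ (P k)) (n : ℕ) :
    Continuous (prodT P m n) := by
  unfold prodT prodE
  refine Continuous.mul ?_ (by fun_prop)
  refine continuous_finsetProd _ fun k _ => ?_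
  exact (hd k).continuous.norm.rpow_const fun x => Or.inr (by positivity)

lemma prodE_root (hm : ∀ k, 0 < m k) (hd : ∀ k, Differentiable ℂ (P k)) (n : ℕ) :
    ∃ (M : ℕ) (Q : ℂ × ℂ → ℂ), 0 < M ∧ Differentiable ℂ Q ∧
      ∀ x, prodE P m n x ^ M = ‖Q x‖ := by
  induction n with
  | zero => exact ⟨1, fun _ => 1, one_pos, by fun_prop, by simp [prodE]⟩
  | succ n ih =>
    obtain ⟨M, Q, hM, hQ, h⟩ := ih
    refine ⟨M * m n, fun x => Q x ^ (m n) * P n x ^ M, Nat.mul_pos hM (hm n),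
      (hQ.pow _).mul ((hd n).pow _), fun x => ?_⟩
    have h1 : prodE P m (n + 1) x = prodE P m n x * ‖P n x‖ ^ ((m n : ℝ)⁻¹) := by
      simp [prodE, Finset.prod_range_succ]
    rw [h1, mul_pow, pow_mul, h, mul_comm M, pow_mul (‖P n x‖ ^ ((m n : ℝ)⁻¹)),
      Real.rpow_inv_natCast_pow (norm_nonneg _) (hm n).ne', norm_mul, norm_pow, norm_pow]

lemma prodT_antitone (hm : ∀ k, 0 < m k)
    (hub : ∀ k x, ‖P k x‖ ≤ Real.exp (m k * ((1 / 2) ^ k * (1 + ‖x‖)))) (x : ℂ × ℂ) :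
    Antitone fun n => prodT P m n x := by
  refine antitone_nat_of_succ_le fun n => ?_
  have h1 : prodE P m (n + 1) x = prodE P m n x * ‖P n x‖ ^ ((m n : ℝ)⁻¹) := by
    simp [prodE, Finset.prod_range_succ]
  have hmn : (m n : ℝ) ≠ 0 := by exact_mod_cast (hm n).ne'
  have h2 : ‖P n x‖ ^ ((m n : ℝ)⁻¹) ≤ Real.exp ((1 / 2) ^ n * (1 + ‖x‖)) := by
    calc ‖P n x‖ ^ ((m n : ℝ)⁻¹)
        ≤ (Real.exp (m n * ((1 / 2) ^ n * (1 + ‖x‖)))) ^ ((m n : ℝ)⁻¹) :=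
          Real.rpow_le_rpow (norm_nonneg _) (hub n x) (by positivity)
      _ = _ := by
          rw [← Real.exp_mul]
          congr 1
          field_simp
  unfold prodT
  rw [h1, mul_assoc]
  refine mul_le_mul_of_nonneg_left ?_ (prodE_nonneg n x)
  calc _ ≤ Real.exp ((1 / 2) ^ n * (1 + ‖x‖)) *
        Real.exp (2 * (1 / 2) ^ (n + 1) * (1 + ‖x‖)) := by gcongr
    _ = _ := by
        rw [← Real.exp_add]
        congr 1
        ring

lemma limU_usc (hd : ∀ k, Differentiable ℂ (P k)) : UpperSemicontinuous (limU P m) := by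
  unfold limU
  refine upperSemicontinuous_iInf fun n => ?_
  refine Continuous.upperSemicontinuous ?_
  exact ENNReal.continuous_log.comp (ENNReal.continuous_ofReal.comp (prodT_continuous hd n))

lemma limU_ne_top (x : ℂ × ℂ) : limU P m x ≠ ⊤ := by
  refine ne_of_lt (lt_of_le_of_lt (iInf_le _ 0) ?_)
  rw [ENNReal.log_lt_top_iff]
  exact ENNReal.ofReal_lt_top

lemma limU_psh (hm : ∀ k, 0 < m k) (hd : ∀ k, Differentiable ℂ (P k))
    (hub : ∀ k x, ‖P k x‖ ≤ Real.exp (m k * ((1 / 2) ^ k * (1 + ‖x‖)))) :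
    PshFn (limU P m) := by
  refine ⟨limU_usc hd, limU_ne_top, fun a v => ⟨?_, fun z => limU_ne_top _, ?_⟩⟩
  · exact (limU_usc hd).comp (g := fun w : ℂ => a + w • v) (by fun_prop)
  · rintro c r hr h hh ⟨F, hF, hhF⟩ hle z hz
    have hℓ : Differentiable ℂ (fun w : ℂ => a + w • v) := by fun_prop
    rw [← EReal.le_of_forall_lt_iff_le]
    intro β hβ
    have hβ' : h z < β := by exact_mod_cast hβ
    set ε : ℝ := (β - h z) / 2 with hε
    have hε0 : 0 < ε := by rw [hε]; linarith
    -- Dini type argument on the sphere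
    obtain ⟨n, hn⟩ : ∃ n, ∀ w ∈ sphere c r, prodT P m n (a + w • v) < Real.exp (h w + ε) := by
      refine dini_sphere (T := fun n w => prodT P m n (a + w • v)) (g := fun w => h w + ε)
        (fun n => (prodT_continuous hd n).comp hℓ.continuous)
        (fun w => prodT_antitone hm hub _)
        ((hh.mono sphere_subset_closedBall).add continuousOn_const) (fun w hw => ?_)
      have h1 : limU P m (a + w • v) < ((h w + ε : ℝ) : EReal) := by
        refine lt_of_le_of_lt (hle w hw) ?_
        exact EReal.coe_lt_coe_iff.2 (lt_add_of_pos_right _ hε0)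
      obtain ⟨n, hn⟩ := iInf_lt_iff.1 h1
      exact ⟨n, lt_of_log_ofReal hn⟩
    -- choose a large index
    have htend : Tendsto (fun k : ℕ => 2 * (1 / 2 : ℝ) ^ k * (1 + ‖a + z • v‖)) atTop (nhds 0) := by
      have := ((tendsto_pow_atTop_nhds_zero_of_lt_one (r := (1 / 2 : ℝ)) (by norm_num)
        (by norm_num)).const_mul 2).mul_const (1 + ‖a + z • v‖)
      simpa using this
    obtain ⟨k, hk1, hk2⟩ := ((htend.eventually_lt_const hε0).and (eventually_ge_atTop n)).exists
    obtain ⟨M, Q, hM, hQ, hroot⟩ := prodE_root hm hd k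
    have hmax := max_principle (Q := fun w => Q (a + w • v)) (hQ.comp hℓ) hM
      (V := fun w => prodE P m k (a + w • v)) (fun w => prodE_nonneg _ _) (fun w => hroot _) hr
      (h := fun w => h w + ε) (hh.add continuousOn_const) (F := fun w => F w + ε)
      (hF.add_const _) (fun w hw => by simp [hhF w hw])
      (fun w hw => ((prodE_le_prodT k _).trans (prodT_antitone hm hub _ hk2)).trans (hn w hw).le)
      z hz
    refine (iInf_le _ k).trans (log_ofReal_le ?_)
    unfold prodT
    calc _ ≤ Real.exp (h z + ε) * Real.exp ε := by
          gcongr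
      _ = Real.exp β := by rw [← Real.exp_add]; congr 1; rw [hε]; ring

end Construction

lemma step_ball (x0 : ℂ × ℂ) {ρ δ : ℝ} (hρ : 0 < ρ) (hδ : 0 < δ) :
    ∃ (P : ℂ × ℂ → ℂ) (m : ℕ) (x1 : ℂ × ℂ) (ρ1 : ℝ), 0 < m ∧ Differentiable ℂ P ∧
      (∀ x, ‖P x‖ ≤ Real.exp (m * (δ * (1 + ‖x‖)))) ∧
      (∀ z ∈ closedBall (0 : ℂ) 1, ‖P (z, lacunaryF z)‖ ≤ Real.exp (-m)) ∧
      0 < ρ1 ∧ closedBall x1 ρ1 ⊆ closedBall x0 ρ ∧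
      ∀ x ∈ closedBall x1 ρ1, Real.exp (-(m * δ)) ≤ ‖P x‖ := by
  obtain ⟨P, m, hm, hd, hub, hgr, x1, hx1, h1⟩ := step_exists x0 (half_pos hρ) hδ
  have hmem : {x | Real.exp (-(m * δ)) < ‖P x‖} ∈ nhds x1 := by
    refine (isOpen_lt continuous_const hd.continuous.norm).mem_nhds ?_
    refine lt_of_lt_of_le ?_ h1
    rw [Real.exp_lt_one_iff]
    have : (0 : ℝ) < m := by exact_mod_cast hm
    have := mul_pos this hδ
    linarith
  obtain ⟨σ, hσ, hsub⟩ := Metric.nhds_basis_closedBall.mem_iff.1 hmem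
  refine ⟨P, m, x1, min σ (ρ / 2), hm, hd, hub, hgr, lt_min hσ (half_pos hρ), ?_, ?_⟩
  · refine closedBall_subset_closedBall' ?_
    rw [mem_closedBall] at hx1
    have := min_le_right σ (ρ / 2)
    linarith
  · intro x hx
    exact (hsub (closedBall_subset_closedBall (min_le_left _ _) hx)).le

lemma exists_seq : ∃ (P : ℕ → ℂ × ℂ → ℂ) (m : ℕ → ℕ) (p : ℂ × ℂ), (∀ k, 0 < m k) ∧
      (∀ k, Differentiable ℂ (P k)) ∧
      (∀ k x, ‖P k x‖ ≤ Real.exp (m k * ((1 / 2) ^ k * (1 + ‖x‖)))) ∧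
      (∀ k, ∀ z ∈ closedBall (0 : ℂ) 1, ‖P k (z, lacunaryF z)‖ ≤ Real.exp (-m k)) ∧
      ∀ k, Real.exp (-(m k * (1 / 2) ^ k)) ≤ ‖P k p‖ := by
  have hstep : ∀ (s : (ℂ × ℂ) × {ρ : ℝ // 0 < ρ}) (k : ℕ),
      ∃ (P : ℂ × ℂ → ℂ) (m : ℕ) (s' : (ℂ × ℂ) × {ρ : ℝ // 0 < ρ}), 0 < m ∧ Differentiable ℂ P ∧
      (∀ x, ‖P x‖ ≤ Real.exp (m * ((1 / 2) ^ k * (1 + ‖x‖)))) ∧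
      (∀ z ∈ closedBall (0 : ℂ) 1, ‖P (z, lacunaryF z)‖ ≤ Real.exp (-m)) ∧
      closedBall s'.1 s'.2 ⊆ closedBall s.1 s.2 ∧
      ∀ x ∈ closedBall s'.1 s'.2, Real.exp (-(m * (1 / 2) ^ k)) ≤ ‖P x‖ := by
    intro s k
    obtain ⟨P, m, x1, ρ1, h1, h2, h3, h4, h5, h6, h7⟩ :=
      step_ball s.1 s.2.2 (δ := (1 / 2) ^ k) (by positivity)
    exact ⟨P, m, (x1, ⟨ρ1, h5⟩), h1, h2, h3, h4, h6, h7⟩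
  choose P m nxt h1 h2 h3 h4 h5 h6 using hstep
  let S : ℕ → (ℂ × ℂ) × {ρ : ℝ // 0 < ρ} := fun n =>
    Nat.rec (0, ⟨1, one_pos⟩) (fun k s => nxt s k) n
  have hS : ∀ k, S (k + 1) = nxt (S k) k := fun k => rfl
  obtain ⟨p, hp⟩ := IsCompact.nonempty_iInter_of_sequence_nonempty_isCompact_isClosed
    (fun k => closedBall (S k).1 ((S k).2 : ℝ))
    (fun k => by rw [hS]; exact h5 _ _)
    (fun k => nonempty_closedBall.2 (S k).2.2.le)
    (isCompact_closedBall _ _) (fun k => isClosed_closedBall)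
  refine ⟨fun k => P (S k) k, fun k => m (S k) k, p, fun k => h1 _ _, fun k => h2 _ _,
    fun k => h3 _ _, fun k => h4 _ _, fun k => h6 _ _ _ ?_⟩
  have := Set.mem_iInter.1 hp (k + 1)
  rwa [hS] at this

lemma lac_pluripolar :
    Pluripolar {p : ℂ × ℂ | ∃ z ∈ closedBall (0 : ℂ) 1, p = (z, lacunaryF z)} := by
  obtain ⟨P, m, p, hm, hd, hub, hgr, hp⟩ := exists_seq
  refine ⟨limU P m, limU_psh hm hd hub, ⟨p, ?_⟩, ?_⟩
  · have hle : ((-2 : ℝ) : EReal) ≤ limU P m p := by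
      refine le_iInf fun n => le_log_ofReal ?_
      refine le_trans ?_ (prodE_le_prodT n p)
      have h1 : ∀ k ∈ Finset.range n,
          Real.exp (-(1 / 2) ^ k) ≤ ‖P k p‖ ^ ((m k : ℝ)⁻¹) := by
        intro k _
        have hmk : (m k : ℝ) ≠ 0 := by exact_mod_cast (hm k).ne'
        calc Real.exp (-(1 / 2) ^ k)
            = (Real.exp (-(m k * (1 / 2) ^ k))) ^ ((m k : ℝ)⁻¹) := by
              rw [← Real.exp_mul]
              congr 1
              field_simp
          _ ≤ _ := Real.rpow_le_rpow (Real.exp_pos _).le (hp k) (by positivity)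
      unfold prodE
      refine le_trans ?_ (Finset.prod_le_prod (fun k _ => (Real.exp_pos _).le) h1)
      rw [← Real.exp_sum, Real.exp_le_exp, Finset.sum_neg_distrib, neg_le_neg_iff]
      exact sum_geometric_two_le n
    intro hbot
    rw [hbot] at hle
    exact (EReal.bot_lt_coe (-2)).not_ge hle
  · rintro q ⟨z, hz, rfl⟩
    rw [EReal.eq_bot_iff_forall_lt]
    intro y
    set g : ℝ := 1 + ‖((z, lacunaryF z) : ℂ × ℂ)‖ with hg
    have hg0 : 0 ≤ g := by positivity
    obtain ⟨n, hn⟩ := exists_nat_gt (2 * g - y + 1)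
    have hle : limU P m (z, lacunaryF z) ≤ ((y - 1 : ℝ) : EReal) := by
      refine (iInf_le _ n).trans (log_ofReal_le ?_)
      have h1 : ∀ k ∈ Finset.range n,
          ‖P k (z, lacunaryF z)‖ ^ ((m k : ℝ)⁻¹) ≤ Real.exp (-1) := by
        intro k _
        have hmk : (m k : ℝ) ≠ 0 := by exact_mod_cast (hm k).ne'
        calc _ ≤ (Real.exp (-(m k : ℝ))) ^ ((m k : ℝ)⁻¹) :=
              Real.rpow_le_rpow (norm_nonneg _) (hgr k z hz) (by positivity)
          _ = _ := by
              rw [← Real.exp_mul]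
              congr 1
              field_simp
      have h2 : prodE P m n (z, lacunaryF z) ≤ Real.exp (-n) := by
        unfold prodE
        refine (Finset.prod_le_prod (fun k _ => Real.rpow_nonneg (norm_nonneg _) _) h1).trans ?_
        rw [Finset.prod_const, Finset.card_range, ← Real.exp_nat_mul]
        simp
      have h3 : Real.exp (2 * (1 / 2) ^ n * g) ≤ Real.exp (2 * g) := by
        apply Real.exp_le_exp.2
        have : (1 / 2 : ℝ) ^ n ≤ 1 := pow_le_one₀ (by norm_num) (by norm_num)
        nlinarith
      calc prodT P m n (z, lacunaryF z) ≤ Real.exp (-n) * Real.exp (2 * g) := by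
            unfold prodT
            exact mul_le_mul h2 h3 (Real.exp_pos _).le (Real.exp_pos _).le
        _ ≤ Real.exp (y - 1) := by
            rw [← Real.exp_add]
            apply Real.exp_le_exp.2
            linarith
    refine lt_of_le_of_lt hle ?_
    exact_mod_cast sub_one_lt y


/-- The function `f(z) = Σ_{k≥1} 2^{−(k−1)!} z^{k!}` is holomorphic on the open unit
disk, continuous on the closed unit disk, quasianalytic in the sense of Gonchar on
the closed unit disk (`liminf ρ_k(f)^{1/k} < 1`), and consequently its graph over the
closed unit disk is pluripolar in `ℂ²`. -/
theorem lacunary_series_gonchar_and_pluripolar :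
    DifferentiableOn ℂ lacunaryF (ball (0 : ℂ) 1) ∧
    ContinuousOn lacunaryF (closedBall (0 : ℂ) 1) ∧
    Filter.liminf (fun k : ℕ => (rhoDisk lacunaryF k) ^ (1 / (k : ℝ)))
      Filter.atTop < 1 ∧
    Pluripolar {p : ℂ × ℂ | ∃ z ∈ closedBall (0 : ℂ) 1, p = (z, lacunaryF z)} := by
  exact ⟨lac_differentiableOn, lac_continuousOn, lac_gonchar, lac_pluripolar⟩
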